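/- arXiv:2312.15303 — 2 statements merged into one kernel-verified Lean document; each statement's English description precedes it below -/
import Mathlib

section
/- One has ρ_2 = ∫_ℝ (2·(s − log 2)² + 2·(s − log 2))·η_log(s) ds = 3π²/20 + 2·(log 2)² − (24/π²)·ζ(3)·log 2, where ζ is the Riemann zeta function. -/
open MeasureTheory

/-- The limiting density of the logarithm of smallest denominators. -/
noncomputable def etaLog (s : ℝ) : ℝ :=
  if s ≤ 0 then 6 / Real.pi ^ 2 * Real.exp (2 * s)
  else if s ≤ Real.log 2 then 6 / Real.pi ^ 2 * (-Real.exp (2 * s) + 2 + 4 * s)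
  else 6 / Real.pi ^ 2 * (-Real.exp (2 * s) + 2
    + 2 * Real.exp (2 * s) * Real.sqrt (1 / 4 - Real.exp (-2 * s))
    - 4 * Real.log (1 / 2 + Real.sqrt (1 / 4 - Real.exp (-2 * s))))

/-!
Integrating by parts twice turns `ρ_n` into elementary terms and the `(n + 1)`-st moment of the
weight `1 / √(1 - exp (-2 * u)) - 1` on `(0, ∞)`. By the beta integral and Legendre's duplication
formula, the moment generating function `M` of this weight satisfies
`1 - t * M t = 2 ^ (-t) * Γ (1 - t / 2) ^ 2 / Γ (1 - t)`. The Taylor coefficients at `0` of the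
logarithm of the right-hand side are rational multiples of `log 2`, `ζ(2)`, `ζ(3)`, …, and the
moments are, up to rational factors, complete Bell polynomials in them.
-/

section LogGamma

open Real Filter Topology

theorem hasSum_one_div_nat_succ_pow {k : ℕ} (hk : 1 < k) :
    HasSum (fun n : ℕ => 1 / ((n : ℝ) + 1) ^ k) (riemannZeta k).re := by
  have hzeta : riemannZeta k = ((∑' n : ℕ, 1 / (n : ℝ) ^ k : ℝ) : ℂ) := by
    rw [zeta_nat_eq_tsum_of_gt_one hk]
    push_cast
    rfl
  have hsum := (Real.summable_one_div_nat_pow.2 hk).hasSum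
  rw [← hasSum_nat_add_iff' 1] at hsum
  rw [hzeta, Complex.ofReal_re]
  simpa [(zero_lt_one.trans hk).ne'] using hsum

/-- Weierstrass's product for `Γ (1 - x)`, in logarithmic form. -/
theorem hasSum_neg_log_one_sub_div_sub_div {x : ℝ} (hx : x < 1) :
    HasSum (fun n : ℕ => -log (1 - x / (n + 1)) - x / (n + 1))
      (log (Gamma (1 - x)) - eulerMascheroniConstant * x) := by
  have hpos (n : ℕ) : 0 < (n : ℝ) + 1 - x := by
    have : (0 : ℝ) ≤ n := n.cast_nonneg
    linarith
  have hterm (n : ℕ) : log (1 - x / (n + 1)) = log (n + 1 - x) - log (n + 1) := by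
    rw [← log_div (hpos n).ne' (by positivity)]
    congr 1
    field_simp
  have hnonneg (n : ℕ) : 0 ≤ -log (1 - x / (n + 1)) - x / (n + 1) := by
    have hpos' : 0 < 1 - x / ((n : ℝ) + 1) := by
      rw [one_sub_div (by positivity)]
      exact div_pos (hpos n) (by positivity)
    linarith [log_le_sub_one_of_pos hpos']
  have hpartial (n : ℕ) :
      ∑ i ∈ Finset.range n, (-log (1 - x / (i + 1)) - x / (i + 1)) =
        BohrMollerup.logGammaSeq (1 - x) n + (log (((n : ℕ) : ℝ) + (1 - x)) - log n)
          - (harmonic n - log n) * x := by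
    have hfactorial : log (n.factorial : ℝ) = ∑ i ∈ Finset.range n, log ((i : ℝ) + 1) := by
      rw [← Finset.prod_range_add_one_eq_factorial, Nat.cast_prod,
        log_prod fun i _ => by positivity]
      push_cast
      rfl
    have hshift (i : ℕ) : log (1 - x + i) = log (i + 1 - x) := by congr 1; ring
    have hharmonic : ∑ i ∈ Finset.range n, x / ((i : ℝ) + 1) = harmonic n * x := by
      simp only [harmonic, Rat.cast_sum, Finset.sum_mul]
      push_cast
      exact Finset.sum_congr rfl fun i _ => by rw [div_eq_inv_mul]
    simp only [BohrMollerup.logGammaSeq, hfactorial, Finset.sum_range_succ, hshift, hterm,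
      hharmonic, Finset.sum_sub_distrib, Finset.sum_neg_distrib, add_sub_assoc']
    ring
  rw [hasSum_iff_tendsto_nat_of_nonneg hnonneg]
  simp only [hpartial]
  have hlog : Tendsto (fun n : ℕ => log (n + (1 - x)) - log n) atTop (𝓝 0) :=
    (tendsto_log_comp_add_sub_log (1 - x)).comp tendsto_natCast_atTop_atTop
  simpa using ((BohrMollerup.tendsto_log_gamma (sub_pos.2 hx)).add hlog).sub
    (tendsto_harmonic_sub_log.mul_const x)

theorem hasSum_pow_add_two_div {x : ℝ} (hx : |x| < 1) :
    HasSum (fun k : ℕ => x ^ (k + 2) / (k + 2)) (-log (1 - x) - x) := by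
  have hsum := (hasSum_nat_add_iff' 1).2 (hasSum_pow_div_log_of_abs_lt_one hx)
  have htwo (k : ℕ) : (k : ℝ) + 1 + 1 = k + 2 := by ring
  simpa [htwo, add_assoc] using hsum

theorem hasSum_div_succ_pow_add_two_div {x : ℝ} (hx : |x| < 1) (n : ℕ) :
    HasSum (fun k : ℕ => (x / (n + 1)) ^ (k + 2) / (k + 2))
      (-log (1 - x / (n + 1)) - x / (n + 1)) := by
  refine hasSum_pow_add_two_div (lt_of_le_of_lt ?_ hx)
  rw [abs_div, abs_of_pos (n.cast_add_one_pos : (0 : ℝ) < n + 1)]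
  exact div_le_self (abs_nonneg x) (by simp)

theorem summable_div_succ_pow_add_two_div {x : ℝ} (hx : |x| < 1) :
    Summable fun p : ℕ × ℕ => (x / (p.1 + 1)) ^ (p.2 + 2) / (p.2 + 2) := by
  have hx' : |(|x|)| < 1 := by rwa [abs_abs]
  have hsummable : Summable fun p : ℕ × ℕ => (|x| / (p.1 + 1)) ^ (p.2 + 2) / (p.2 + 2) := by
    rw [summable_prod_of_nonneg fun p => by positivity]
    refine ⟨fun n => (hasSum_div_succ_pow_add_two_div hx' n).summable, ?_⟩
    simpa only [(hasSum_div_succ_pow_add_two_div hx' _).tsum_eq] using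
      (hasSum_neg_log_one_sub_div_sub_div (abs_lt.1 hx').2).summable
  refine hsummable.of_norm_bounded fun p => le_of_eq ?_
  rw [norm_div, norm_pow, norm_div, norm_eq_abs x,
    norm_of_nonneg (by positivity : (0 : ℝ) ≤ p.1 + 1),
    norm_of_nonneg (by positivity : (0 : ℝ) ≤ p.2 + 2)]

theorem hasSum_log_Gamma_one_sub {x : ℝ} (hx : |x| < 1) :
    HasSum (fun k : ℕ => (riemannZeta (k + 2 : ℕ)).re / (k + 2) * x ^ (k + 2))
      (log (Gamma (1 - x)) - eulerMascheroniConstant * x) := by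
  have hsummable := summable_div_succ_pow_add_two_div hx
  have hcolumn (k : ℕ) : HasSum (fun n : ℕ => (x / (n + 1)) ^ (k + 2) / (k + 2))
      ((riemannZeta (k + 2 : ℕ)).re / (k + 2) * x ^ (k + 2)) := by
    convert! (hasSum_one_div_nat_succ_pow (k := k + 2) (by lia)).mul_left
      (x ^ (k + 2) / ((k : ℝ) + 2)) using 1
    · ext n
      rw [div_pow]
      ring
    · ring
  have htotal := (hsummable.hasSum.prod_fiberwise (hasSum_div_succ_pow_add_two_div hx)).unique
    (hasSum_neg_log_one_sub_div_sub_div (abs_lt.1 hx).2)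
  rw [← htotal, ← (Equiv.prodComm ℕ ℕ).tsum_eq]
  exact hsummable.prod_symm.hasSum.prod_fiberwise hcolumn

end LogGamma

section IteratedDeriv

open Filter Topology

variable {𝕜 : Type*} [NontriviallyNormedField 𝕜]

theorem iteratedDeriv_succ_id_mul_zero {f : 𝕜 → 𝕜} {n : ℕ} (hf : ContDiffAt 𝕜 (n + 1) f 0) :
    iteratedDeriv (n + 1) (fun t => t * f t) 0 = (n + 1) * iteratedDeriv n f 0 := by
  rw [iteratedDeriv_fun_mul contDiffAt_id (by exact_mod_cast hf), Finset.sum_eq_single 1]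
  · simp
  · intro i _ hi
    simp [iteratedDeriv_fun_id_zero, hi]
  · simp

theorem hasFPowerSeriesAt_ofScalars_zero {f : 𝕜 → 𝕜} {c : ℕ → 𝕜}
    (h : ∀ᶠ z in 𝓝 0, HasSum (fun n => c n * z ^ n) (f z)) :
    HasFPowerSeriesAt f (FormalMultilinearSeries.ofScalars 𝕜 c) 0 := by
  simpa [hasFPowerSeriesAt_iff, mul_comm] using h

theorem iteratedDeriv_zero_of_hasSum [CompleteSpace 𝕜] [CharZero 𝕜] {f : 𝕜 → 𝕜} {c : ℕ → 𝕜}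
    (h : ∀ᶠ z in 𝓝 0, HasSum (fun n => c n * z ^ n) (f z)) (n : ℕ) :
    iteratedDeriv n f 0 = n.factorial * c n := by
  have hf := hasFPowerSeriesAt_ofScalars_zero h
  have hcoeff := congrArg (fun p => p.coeff n)
    (hf.analyticAt.hasFPowerSeriesAt.eq_formalMultilinearSeries hf)
  simp only [FormalMultilinearSeries.coeff_ofScalars] at hcoeff
  rw [← hcoeff, mul_div_cancel₀ _ (Nat.cast_ne_zero.2 n.factorial_ne_zero)]

theorem iteratedDeriv_succ_exp_comp {f : ℝ → ℝ} {x : ℝ} {n : ℕ} (hf : ContDiffAt ℝ (n + 1) f x) :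
    iteratedDeriv (n + 1) (fun t => Real.exp (f t)) x =
      ∑ i ∈ Finset.range (n + 1),
        n.choose i * iteratedDeriv i (fun t => Real.exp (f t)) x *
          iteratedDeriv (n - i + 1) f x := by
  have hderiv : deriv (fun t => Real.exp (f t)) =ᶠ[𝓝 x] fun t => Real.exp (f t) * deriv f t := by
    filter_upwards [hf.eventually (by simp)] with t ht
    exact deriv_exp (ht.differentiableAt (by simp))
  rw [iteratedDeriv_succ', hderiv.iteratedDeriv_eq,
    iteratedDeriv_fun_mul (hf.exp.of_le (by norm_cast; simp)) ?_]
  · simp only [iteratedDeriv_succ']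
  · exact (hf.fderiv_right (m := n) le_rfl).clm_apply contDiffAt_const

/-- The right-hand side is the fourth complete Bell polynomial in the derivatives of `f`. -/
theorem iteratedDeriv_four_exp_comp {f : ℝ → ℝ} {x : ℝ} (hf : ContDiffAt ℝ 4 f x) :
    iteratedDeriv 4 (fun t => Real.exp (f t)) x = Real.exp (f x) *
      (iteratedDeriv 1 f x ^ 4 + 6 * iteratedDeriv 1 f x ^ 2 * iteratedDeriv 2 f x
        + 4 * iteratedDeriv 1 f x * iteratedDeriv 3 f x + 3 * iteratedDeriv 2 f x ^ 2
        + iteratedDeriv 4 f x) := by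
  have hstep (n : ℕ) (hn : n < 4) := iteratedDeriv_succ_exp_comp (n := n) (hf.of_le (by norm_cast))
  rw [hstep 3 (by simp)]
  simp only [Finset.sum_range_succ, Finset.sum_range_zero, hstep 0 (by simp), hstep 1 (by simp),
    hstep 2 (by simp), Nat.choose]
  simp
  ring

end IteratedDeriv

section Beta

open Real Set

theorem integral_rpow_mul_one_sub_rpow {a b : ℝ} (ha : 0 < a) (hb : 0 < b) :
    ∫ x in Ioo 0 1, x ^ (a - 1) * (1 - x) ^ (b - 1) = ProbabilityTheory.beta a b := by
  rw [ProbabilityTheory.beta_eq_betaIntegralReal a b ha hb, Complex.betaIntegral,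
    intervalIntegral.integral_of_le zero_le_one, integral_Ioc_eq_integral_Ioo,
    ← Complex.ofReal_re (∫ x in Ioo 0 1, x ^ (a - 1) * (1 - x) ^ (b - 1)),
    ← integral_complex_ofReal]
  congr 1
  refine setIntegral_congr_fun measurableSet_Ioo fun x hx => ?_
  simp only [Complex.ofReal_mul, Complex.ofReal_cpow hx.1.le,
    Complex.ofReal_cpow (sub_nonneg.2 hx.2.le)]
  push_cast
  rfl

theorem exp_neg_two_mul_lt_one {u : ℝ} (hu : 0 < u) : exp (-2 * u) < 1 :=
  exp_lt_one_iff.2 (by linarith)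

theorem image_exp_neg_two_mul_Ioi : (fun u : ℝ => exp (-2 * u)) '' Ioi 0 = Ioo 0 1 := by
  ext y
  constructor
  · rintro ⟨u, hu, rfl⟩
    exact ⟨exp_pos _, exp_neg_two_mul_lt_one hu⟩
  · rintro ⟨hy0, hy1⟩
    refine ⟨-log y / 2, ?_, ?_⟩
    · rw [mem_Ioi]
      linarith [log_neg hy0 hy1]
    · simp only [show -2 * (-log y / 2) = log y by ring, exp_log hy0]

theorem hasDerivAt_exp_const_mul (c u : ℝ) :
    HasDerivAt (fun u => exp (c * u)) (c * exp (c * u)) u := by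
  simpa [mul_comm] using ((hasDerivAt_id u).const_mul c).exp

theorem integral_exp_div_sqrt_one_sub_exp {a : ℝ} (ha : 0 < a) :
    ∫ u in Ioi 0, exp (-2 * a * u) / √(1 - exp (-2 * u)) =
      ProbabilityTheory.beta a (1 / 2) / 2 := by
  have hsubst : EqOn (fun u => |-2 * exp (-2 * u)| •
        (exp (-2 * u) ^ (a - 1) * (1 - exp (-2 * u)) ^ ((1 / 2 : ℝ) - 1)))
      (fun u => 2 * (exp (-2 * a * u) / √(1 - exp (-2 * u)))) (Ioi 0) := by
    intro u hu
    have hpos : 0 < 1 - exp (-2 * u) := sub_pos.2 (exp_neg_two_mul_lt_one hu)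
    simp only [smul_eq_mul]
    rw [abs_mul, abs_of_pos (exp_pos _), show (1 / 2 - 1 : ℝ) = -(1 / 2) by norm_num,
      rpow_neg hpos.le, ← sqrt_eq_rpow, ← exp_mul, abs_neg, abs_two,
      show -2 * a * u = -2 * u + -2 * u * (a - 1) by ring, exp_add]
    ring
  rw [← integral_rpow_mul_one_sub_rpow ha one_half_pos, ← image_exp_neg_two_mul_Ioi,
    integral_image_eq_integral_abs_deriv_smul measurableSet_Ioi
      (fun u _ => (hasDerivAt_exp_const_mul (-2) u).hasDerivWithinAt)
      (exp_injective.comp (mul_right_injective₀ (by norm_num))).injOn,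
    setIntegral_congr_fun measurableSet_Ioi hsubst, integral_const_mul]
  ring

theorem integrableOn_exp_div_sqrt_one_sub_exp {a : ℝ} (ha : 0 < a) :
    IntegrableOn (fun u => exp (-2 * a * u) / √(1 - exp (-2 * u))) (Ioi 0) := by
  refine Integrable.of_integral_ne_zero ?_
  rw [integral_exp_div_sqrt_one_sub_exp ha]
  exact (half_pos (ProbabilityTheory.beta_pos ha one_half_pos)).ne'

end Beta

section MomentWeight

open Real Set Filter Topology ProbabilityTheory

/-- The weight on `(0, ∞)` whose moments are, up to elementary terms, the integrals `ρ_n`. It is the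
derivative of `arcosh (exp u) - u`. -/
noncomputable def momentWeight (u : ℝ) : ℝ := 1 / √(1 - exp (-2 * u)) - 1

theorem measurable_momentWeight : Measurable momentWeight := by
  unfold momentWeight
  fun_prop

theorem sqrt_one_sub_exp_pos {u : ℝ} (hu : 0 < u) : 0 < √(1 - exp (-2 * u)) :=
  sqrt_pos.2 (sub_pos.2 (exp_neg_two_mul_lt_one hu))

theorem sqrt_one_sub_exp_lt_one (u : ℝ) : √(1 - exp (-2 * u)) < 1 := by
  rw [sqrt_lt' one_pos]
  linarith [exp_pos (-2 * u)]

theorem sq_sqrt_one_sub_exp {u : ℝ} (hu : 0 ≤ u) :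
    √(1 - exp (-2 * u)) ^ 2 = 1 - exp (-2 * u) :=
  sq_sqrt (sub_nonneg.2 (exp_le_one_iff.2 (by linarith)))

theorem momentWeight_nonneg {u : ℝ} (hu : 0 < u) : 0 ≤ momentWeight u :=
  sub_nonneg.2 (one_le_one_div (sqrt_one_sub_exp_pos hu) (sqrt_one_sub_exp_lt_one u).le)

theorem momentWeight_le {u : ℝ} (hu : 0 < u) :
    momentWeight u ≤ exp (-2 * u) / √(1 - exp (-2 * u)) := by
  have hpos := sqrt_one_sub_exp_pos hu
  have hlt := sqrt_one_sub_exp_lt_one u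
  have hsq := sq_sqrt_one_sub_exp hu.le
  rw [momentWeight, div_sub_one hpos.ne']
  gcongr
  nlinarith

theorem integrableOn_exp_mul_momentWeight {t : ℝ} (ht : t < 2) :
    IntegrableOn (fun u => exp (t * u) * momentWeight u) (Ioi 0) := by
  refine (integrableOn_exp_div_sqrt_one_sub_exp (a := 1 - t / 2) (by linarith)).mono'
    (by have := measurable_momentWeight; fun_prop) ?_
  filter_upwards [ae_restrict_mem measurableSet_Ioi] with u hu
  rw [norm_of_nonneg (mul_nonneg (exp_pos _).le (momentWeight_nonneg hu)),
    show -2 * (1 - t / 2) * u = t * u + -2 * u by ring, exp_add, mul_div_assoc]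
  exact mul_le_mul_of_nonneg_left (momentWeight_le hu) (exp_pos _).le

/-- The measure on `(0, ∞)` with density `momentWeight`, set up so that the moment generating
function machinery applies. -/
noncomputable def momentMeasure : Measure ℝ :=
  (volume.restrict (Ioi 0)).withDensity fun u => ENNReal.ofReal (momentWeight u)

theorem toReal_ofReal_momentWeight_smul {u : ℝ} (hu : 0 < u) (x : ℝ) :
    (ENNReal.ofReal (momentWeight u)).toReal • x = x * momentWeight u := by
  rw [ENNReal.toReal_ofReal (momentWeight_nonneg hu), smul_eq_mul, mul_comm]

theorem integral_momentMeasure (f : ℝ → ℝ) :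
    ∫ u, f u ∂momentMeasure = ∫ u in Ioi 0, f u * momentWeight u := by
  rw [momentMeasure, integral_withDensity_eq_integral_toReal_smul
    measurable_momentWeight.ennreal_ofReal (by simp)]
  exact setIntegral_congr_fun measurableSet_Ioi fun u hu =>
    toReal_ofReal_momentWeight_smul hu (f u)

theorem integrable_momentMeasure_iff {f : ℝ → ℝ} :
    Integrable f momentMeasure ↔ IntegrableOn (fun u => f u * momentWeight u) (Ioi 0) := by
  rw [momentMeasure, integrable_withDensity_iff_integrable_smul'
    measurable_momentWeight.ennreal_ofReal (by simp)]
  exact integrableOn_congr_fun (fun u hu => toReal_ofReal_momentWeight_smul hu (f u))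
    measurableSet_Ioi

theorem zero_mem_interior_integrableExpSet_momentMeasure :
    0 ∈ interior (integrableExpSet id momentMeasure) :=
  interior_maximal (fun _ ht =>
    integrable_momentMeasure_iff.2 (integrableOn_exp_mul_momentWeight ht)) isOpen_Iio
    (mem_Iio.2 (two_pos : (0 : ℝ) < 2))

theorem integrableOn_pow_mul_momentWeight (n : ℕ) :
    IntegrableOn (fun u => u ^ n * momentWeight u) (Ioi 0) :=
  integrable_momentMeasure_iff.1 <|
    integrable_pow_of_mem_interior_integrableExpSet
      zero_mem_interior_integrableExpSet_momentMeasure n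

/-- The logarithm of `1 - t * M t`, where `M` is the moment generating function of
`momentMeasure`. -/
noncomputable def logGammaQuotient (t : ℝ) : ℝ :=
  2 * log (Gamma (1 - t / 2)) - log (Gamma (1 - t)) - t * log 2

theorem mul_beta_one_half {a : ℝ} (ha : 0 < a) :
    a * beta a (1 / 2) = exp (logGammaQuotient (-2 * a)) := by
  have hGamma_two_mul := Gamma_pos_of_pos (mul_pos two_pos ha)
  have hGamma_add_half := Gamma_pos_of_pos (add_pos ha one_half_pos)
  have hpow : exp (2 * a * log 2) * 2 ^ (1 - 2 * a) = 2 := by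
    rw [mul_comm _ (log 2), ← rpow_def_of_pos two_pos, ← rpow_add two_pos]
    norm_num
  have hexp : exp (logGammaQuotient (-2 * a)) =
      Gamma (a + 1) ^ 2 / Gamma (2 * a + 1) * exp (2 * a * log 2) := by
    rw [logGammaQuotient, show 1 - -2 * a / 2 = a + 1 by ring, show 1 - -2 * a = 2 * a + 1 by ring,
      sub_eq_add_neg, neg_mul, neg_mul, neg_neg, exp_add, exp_sub, two_mul (log _), exp_add,
      exp_log (Gamma_pos_of_pos (by positivity)), exp_log (Gamma_pos_of_pos (by positivity)), sq]
  rw [hexp, Gamma_add_one ha.ne', Gamma_add_one (by positivity), beta, Gamma_one_half_eq]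
  have hduplication := Gamma_mul_Gamma_add_half a
  rw [mul_div_assoc', div_mul_eq_mul_div, div_eq_div_iff hGamma_add_half.ne'
    (mul_pos (mul_pos two_pos ha) hGamma_two_mul).ne']
  linear_combination (-a ^ 2 * Gamma a * exp (2 * a * log 2)) * hduplication
    - a ^ 2 * Gamma a * Gamma (2 * a) * √π * hpow

theorem one_sub_mul_mgf_momentMeasure {t : ℝ} (ht : t < 0) :
    1 - t * mgf id momentMeasure t = exp (logGammaQuotient t) := by
  have hbeta := integral_exp_div_sqrt_one_sub_exp (a := -t / 2) (by linarith)
  have hbeta_int := integrableOn_exp_div_sqrt_one_sub_exp (a := -t / 2) (by linarith)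
  rw [show -2 * (-t / 2) = t by ring] at hbeta hbeta_int
  have hmgf : mgf id momentMeasure t = beta (-t / 2) (1 / 2) / 2 + 1 / t := by
    have hexp : ∫ u in Ioi 0, exp (t * u) = -1 / t := by
      rw [integral_exp_mul_Ioi ht, mul_zero, exp_zero]
    rw [mgf, integral_momentMeasure]
    simp only [momentWeight, mul_sub, mul_one, mul_one_div, id]
    rw [integral_sub hbeta_int (integrableOn_exp_mul_Ioi ht 0), hbeta, hexp]
    ring
  have hGamma := mul_beta_one_half (a := -t / 2) (by linarith)
  rw [show -2 * (-t / 2) = t by ring] at hGamma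
  have ht_ne := ht.ne
  rw [hmgf, ← hGamma]
  field_simp
  ring

/-- The Taylor coefficients of `logGammaQuotient` at `0`. -/
noncomputable def logGammaQuotientCoeff : ℕ → ℝ
  | 0 => 0
  | 1 => -log 2
  | k + 2 => ((1 / 2) ^ (k + 1) - 1) * ((riemannZeta (k + 2 : ℕ)).re / (k + 2))

theorem hasSum_logGammaQuotient {t : ℝ} (ht : |t| < 1) :
    HasSum (fun n => logGammaQuotientCoeff n * t ^ n) (logGammaQuotient t) := by
  have ht_half : |t / 2| < 1 := by
    rw [abs_div, abs_two]
    linarith [abs_nonneg t]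
  have hsum := ((hasSum_log_Gamma_one_sub ht_half).mul_left 2).sub (hasSum_log_Gamma_one_sub ht)
  rw [← hasSum_nat_add_iff' 2]
  convert! hsum using 1
  · ext k
    rw [logGammaQuotientCoeff, div_pow, div_pow]
    ring
  · simp only [Finset.sum_range_succ, Finset.sum_range_zero, logGammaQuotientCoeff,
      logGammaQuotient]
    ring

theorem eventually_hasSum_logGammaQuotient :
    ∀ᶠ t in 𝓝 0, HasSum (fun n => logGammaQuotientCoeff n * t ^ n) (logGammaQuotient t) := by
  have habs : ∀ᶠ t : ℝ in 𝓝 0, |t| < 1 := by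
    filter_upwards [Ioo_mem_nhds neg_one_lt_zero one_pos] with t ht using abs_lt.2 ht
  exact habs.mono fun t => hasSum_logGammaQuotient

theorem analyticAt_logGammaQuotient : AnalyticAt ℝ logGammaQuotient 0 :=
  (hasFPowerSeriesAt_ofScalars_zero eventually_hasSum_logGammaQuotient).analyticAt

/-- Both sides are analytic at `0`, so their agreement on `t < 0` propagates to a neighbourhood. -/
theorem eventually_one_sub_mul_mgf_momentMeasure :
    (fun t => 1 - t * mgf id momentMeasure t) =ᶠ[𝓝 0] fun t => exp (logGammaQuotient t) := by
  have hmgf := analyticAt_mgf zero_mem_interior_integrableExpSet_momentMeasure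
  refine ((analyticAt_const.sub (analyticAt_id.mul hmgf)).frequently_eq_iff_eventually_eq
    analyticAt_logGammaQuotient.rexp).1 ?_
  have hleft : ∃ᶠ t : ℝ in 𝓝[<] 0, 1 - t * mgf id momentMeasure t = exp (logGammaQuotient t) := by
    refine Eventually.frequently ?_
    filter_upwards [self_mem_nhdsWithin] with t ht using one_sub_mul_mgf_momentMeasure ht
  exact hleft.filter_mono (nhdsWithin_mono 0 fun t ht => ne_of_lt ht)

theorem succ_mul_integral_pow_mul_momentWeight (n : ℕ) :
    (n + 1) * ∫ u in Ioi 0, u ^ n * momentWeight u =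
      -iteratedDeriv (n + 1) (fun t => exp (logGammaQuotient t)) 0 := by
  have hzero := zero_mem_interior_integrableExpSet_momentMeasure
  have hmgf := (analyticAt_mgf hzero).contDiffAt (n := n + 1)
  rw [← eventually_one_sub_mul_mgf_momentMeasure.iteratedDeriv_eq,
    iteratedDeriv_const_sub n.succ_pos, iteratedDeriv_neg, iteratedDeriv_succ_id_mul_zero hmgf,
    iteratedDeriv_mgf_zero hzero, neg_neg, ← integral_momentMeasure]
  rfl

theorem iteratedDeriv_logGammaQuotient_zero (n : ℕ) :
    iteratedDeriv n logGammaQuotient 0 = n.factorial * logGammaQuotientCoeff n :=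
  iteratedDeriv_zero_of_hasSum eventually_hasSum_logGammaQuotient n

theorem integral_pow_three_mul_momentWeight :
    ∫ u in Ioi 0, u ^ 3 * momentWeight u =
      3 * π ^ 4 / 320 + π ^ 2 * log 2 ^ 2 / 8 - 3 / 2 * (riemannZeta 3).re * log 2
        - log 2 ^ 4 / 4 := by
  have hzeta_two : (riemannZeta 2).re = π ^ 2 / 6 := by
    rw [riemannZeta_two]
    norm_cast
  have hzeta_four : (riemannZeta 4).re = π ^ 4 / 90 := by
    rw [riemannZeta_four]
    norm_cast
  have hmoment := succ_mul_integral_pow_mul_momentWeight 3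
  have hzero : logGammaQuotient 0 = 0 := by simp [logGammaQuotient]
  rw [iteratedDeriv_four_exp_comp analyticAt_logGammaQuotient.contDiffAt, hzero,
    exp_zero] at hmoment
  simp only [iteratedDeriv_logGammaQuotient_zero, logGammaQuotientCoeff, Nat.factorial] at hmoment
  norm_num [hzeta_two, hzeta_four] at hmoment
  linear_combination hmoment / 4

end MomentWeight

section Reduction

open Real Set Filter Topology ProbabilityTheory

theorem integral_eq_add_of_eqOn_Iic_Ioc_Ioi {E : Type*} [NormedAddCommGroup E] [NormedSpace ℝ E]
    {f f₁ f₂ f₃ : ℝ → E} {a b : ℝ} (hab : a ≤ b)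
    (h₁ : EqOn f₁ f (Iic a)) (h₂ : EqOn f₂ f (Ioc a b)) (h₃ : EqOn f₃ f (Ioi b))
    (hf₁ : IntegrableOn f₁ (Iic a)) (hf₂ : IntegrableOn f₂ (Ioc a b))
    (hf₃ : IntegrableOn f₃ (Ioi b)) :
    ∫ x, f x = (∫ x in Iic a, f₁ x) + (∫ x in Ioc a b, f₂ x) + ∫ x in Ioi b, f₃ x := by
  have hf_Ioc := hf₂.congr_fun h₂ measurableSet_Ioc
  have hf_Ioi := hf₃.congr_fun h₃ measurableSet_Ioi
  have hunion : Ioc a b ∪ Ioi b = Ioi a := Ioc_union_Ioi_eq_Ioi hab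
  rw [← intervalIntegral.integral_Iic_add_Ioi (hf₁.congr_fun h₁ measurableSet_Iic)
      (hunion ▸ hf_Ioc.union hf_Ioi), ← hunion,
    setIntegral_union (Ioc_disjoint_Ioi le_rfl) measurableSet_Ioi hf_Ioc hf_Ioi, ← add_assoc,
    setIntegral_congr_fun measurableSet_Iic h₁, setIntegral_congr_fun measurableSet_Ioc h₂,
    setIntegral_congr_fun measurableSet_Ioi h₃]

theorem integrableOn_pow_mul_exp_mul_Ioi {c : ℝ} (hc : c < 0) (a : ℝ) (n : ℕ) :
    IntegrableOn (fun u => u ^ n * exp (c * u)) (Ioi a) :=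
  integrable_pow_mul_exp_of_mem_interior_integrableExpSet (X := id)
    (interior_maximal (fun _ hc => integrableOn_exp_mul_Ioi hc a) isOpen_Iio (mem_Iio.2 hc)) n

theorem integrableOn_pow_mul_exp_mul_Iic {c : ℝ} (hc : 0 < c) (a : ℝ) (n : ℕ) :
    IntegrableOn (fun u => u ^ n * exp (c * u)) (Iic a) :=
  integrable_pow_mul_exp_of_mem_interior_integrableExpSet (X := id)
    (interior_maximal (fun _ hc => integrableOn_exp_mul_Iic hc a) isOpen_Ioi (mem_Ioi.2 hc)) n

theorem tendsto_pow_mul_exp_neg_mul_atTop_nhds_zero {c : ℝ} (hc : 0 < c) (n : ℕ) :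
    Tendsto (fun u => u ^ n * exp (-c * u)) atTop (𝓝 0) := by
  simpa only [rpow_natCast] using tendsto_rpow_mul_exp_neg_mul_atTop_nhds_zero n c hc

theorem integrableOn_two_mul_pow_succ_add_mul {f : ℝ → ℝ} {s : Set ℝ}
    (hf : ∀ n : ℕ, IntegrableOn (fun u => u ^ n * f u) s) (n : ℕ) :
    IntegrableOn (fun u => (2 * u ^ (n + 1) + (n + 1) * u ^ n) * f u) s := by
  simp only [add_mul _ _ (f _), mul_assoc]
  exact ((hf (n + 1)).const_mul 2).add ((hf n).const_mul _)

/-- The integrand of `ρ_(n+1)` is exact up to a multiple of `u ^ (n + 2) * w`: this is integration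
by parts twice, packaged as one primitive. -/
theorem hasDerivAt_pow_mul_add_pow_mul {g h : ℝ → ℝ} {u w : ℝ} (n : ℕ)
    (hg : HasDerivAt g (2 * g u - 8 * h u) u) (hh : HasDerivAt h (-w) u) :
    HasDerivAt (fun u => u ^ (n + 1) * g u + 8 / (n + 2) * (u ^ (n + 2) * h u))
      ((2 * u ^ (n + 1) + (n + 1) * u ^ n) * g u - 8 / (n + 2) * (u ^ (n + 2) * w)) u := by
  have hderiv := ((hasDerivAt_pow (n + 1) u).mul hg).add
    (((hasDerivAt_pow (n + 2) u).mul hh).const_mul (8 / (n + 2 : ℝ)))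
  refine hderiv.congr_deriv ?_
  push_cast
  field_simp
  ring

theorem exp_two_mul_add_log_two (u : ℝ) : exp (2 * (u + log 2)) = 4 * exp (2 * u) := by
  rw [mul_add, exp_add, two_mul (log 2), exp_add, exp_log two_pos]
  ring

theorem four_mul_exp_two_mul_neg_log_two : 4 * exp (2 * -log 2) = 1 := by
  simpa using (exp_two_mul_add_log_two (-log 2)).symm

theorem etaLog_add_log_two_of_le {u : ℝ} (hu : u ≤ -log 2) :
    etaLog (u + log 2) = 6 / π ^ 2 * (4 * exp (2 * u)) := by
  rw [etaLog, if_pos (by linarith), exp_two_mul_add_log_two]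

theorem integrableOn_pow_mul_four_mul_exp (a : ℝ) (n : ℕ) :
    IntegrableOn (fun u => u ^ n * (4 * exp (2 * u))) (Iic a) := by
  simp only [mul_left_comm _ (4 : ℝ)]
  exact (integrableOn_pow_mul_exp_mul_Iic two_pos a n).const_mul 4

theorem integral_Iic_mul_four_mul_exp (a : ℝ) (n : ℕ) :
    ∫ u in Iic a, (2 * u ^ (n + 1) + (n + 1) * u ^ n) * (4 * exp (2 * u)) =
      a ^ (n + 1) * (4 * exp (2 * a)) := by
  have hderiv (u : ℝ) : HasDerivAt (fun u => u ^ (n + 1) * (4 * exp (2 * u)))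
      ((2 * u ^ (n + 1) + (n + 1) * u ^ n) * (4 * exp (2 * u))) u := by
    have hexp : HasDerivAt (fun u => 4 * exp (2 * u)) (2 * (4 * exp (2 * u)) - 8 * 0) u :=
      ((hasDerivAt_exp_const_mul 2 u).const_mul 4).congr_deriv (by ring)
    simpa using hasDerivAt_pow_mul_add_pow_mul n hexp (h := 0) (w := 0)
      (by simp)
  have hlim : Tendsto (fun u => u ^ (n + 1) * (4 * exp (2 * u))) atBot (𝓝 0) := by
    have hneg := ((tendsto_pow_mul_exp_neg_mul_atTop_nhds_zero two_pos (n + 1)).comp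
      tendsto_neg_atBot_atTop).const_mul (4 * (-1) ^ (n + 1))
    rw [mul_zero] at hneg
    refine hneg.congr fun u => ?_
    have hsign : (-1) ^ (n + 1) * (-u) ^ (n + 1) = u ^ (n + 1) := by
      rw [← mul_pow, neg_one_mul, neg_neg]
    rw [Function.comp_apply, neg_mul_neg]
    linear_combination 4 * exp (2 * u) * hsign
  rw [integral_Iic_of_hasDerivAt_of_tendsto' (fun u _ => hderiv u)
    (integrableOn_two_mul_pow_succ_add_mul (integrableOn_pow_mul_four_mul_exp a) n) hlim, sub_zero]

theorem etaLog_add_log_two_of_mem_Ioc {u : ℝ} (hu : u ∈ Ioc (-log 2) 0) :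
    etaLog (u + log 2) = 6 / π ^ 2 * (-4 * exp (2 * u) + 2 + 4 * (u + log 2)) := by
  rw [etaLog, if_neg (by linarith [hu.1]), if_pos (by linarith [hu.2]), exp_two_mul_add_log_two]
  ring

theorem integral_Ioc_mul_neg_four_mul_exp_add (n : ℕ) :
    ∫ u in Ioc (-log 2) 0, (2 * u ^ (n + 1) + (n + 1) * u ^ n) *
        (-4 * exp (2 * u) + 2 + 4 * (u + log 2)) =
      -(-log 2) ^ (n + 1) - 8 / (n + 2) * ∫ u in (-log 2)..0, u ^ (n + 2) := by
  have hderiv (u : ℝ) := hasDerivAt_pow_mul_add_pow_mul (u := u) (w := -1) n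
    (g := fun u => -4 * exp (2 * u) + 2 + 4 * (u + log 2)) (h := fun u => u + log 2)
    (((((hasDerivAt_exp_const_mul 2 u).const_mul (-4)).add_const 2).add
      (((hasDerivAt_id u).add_const (log 2)).const_mul 4)).congr_deriv (by ring))
    (by simpa using (hasDerivAt_id u).add_const (log 2))
  have hmain : IntervalIntegrable (fun u => (2 * u ^ (n + 1) + (n + 1) * u ^ n) *
      (-4 * exp (2 * u) + 2 + 4 * (u + log 2))) volume (-log 2) 0 :=
    Continuous.intervalIntegrable (by fun_prop) _ _
  have hrest : IntervalIntegrable (fun u => 8 / (n + 2) * (u ^ (n + 2) * -1)) volume (-log 2) 0 :=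
    Continuous.intervalIntegrable (by fun_prop) _ _
  have hFTC := intervalIntegral.integral_eq_sub_of_hasDerivAt (fun u _ => hderiv u)
    (hmain.sub hrest)
  rw [intervalIntegral.integral_sub hmain hrest, intervalIntegral.integral_const_mul,
    intervalIntegral.integral_mul_const, sub_eq_iff_eq_add] at hFTC
  rw [← intervalIntegral.integral_of_le (neg_nonpos.2 (log_nonneg one_le_two)), hFTC]
  simp only [ne_eq, Nat.add_eq_zero_iff, one_ne_zero, and_false, not_false_eq_true, zero_pow,
    neg_mul, four_mul_exp_two_mul_neg_log_two]
  ring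

/-- The function `exp (-2 * v)`, where `u = log (cosh v)` and `v ≥ 0`; it uniformizes the last
branch of `etaLog`. -/
noncomputable def logCoshDecay (u : ℝ) : ℝ := (1 - √(1 - exp (-2 * u))) / (1 + √(1 - exp (-2 * u)))

theorem continuous_logCoshDecay : Continuous logCoshDecay := by
  have hne (u : ℝ) : 1 + √(1 - exp (-2 * u)) ≠ 0 := by positivity
  unfold logCoshDecay
  fun_prop (disch := assumption)

theorem logCoshDecay_nonneg (u : ℝ) : 0 ≤ logCoshDecay u :=
  div_nonneg (sub_nonneg.2 (sqrt_one_sub_exp_lt_one u).le) (by positivity)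

theorem logCoshDecay_eq_exp_div {u : ℝ} (hu : 0 ≤ u) :
    logCoshDecay u = exp (-2 * u) / (1 + √(1 - exp (-2 * u))) ^ 2 := by
  rw [logCoshDecay, div_eq_div_iff (by positivity) (by positivity)]
  linear_combination (-(1 + √(1 - exp (-2 * u)))) * sq_sqrt_one_sub_exp hu

theorem logCoshDecay_le_exp {u : ℝ} (hu : 0 ≤ u) : logCoshDecay u ≤ exp (-2 * u) := by
  rw [logCoshDecay_eq_exp_div hu]
  exact div_le_self (exp_pos _).le (one_le_pow₀ (by linarith [sqrt_nonneg (1 - exp (-2 * u))]))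

theorem one_add_logCoshDecay (u : ℝ) : 1 + logCoshDecay u = 2 / (1 + √(1 - exp (-2 * u))) := by
  have hpos : 0 < 1 + √(1 - exp (-2 * u)) := by positivity
  rw [logCoshDecay, add_div' _ _ _ hpos.ne', one_mul, add_add_sub_cancel, one_add_one_eq_two]

theorem hasDerivAt_logCoshDecay {u : ℝ} (hu : 0 < u) :
    HasDerivAt logCoshDecay (-2 * logCoshDecay u / √(1 - exp (-2 * u))) u := by
  have hpos := sqrt_one_sub_exp_pos hu
  have hsqrt := (((hasDerivAt_exp_const_mul (-2) u).const_sub 1).sqrt (sqrt_pos.1 hpos).ne')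
  refine ((hsqrt.const_sub 1).div (hsqrt.const_add 1) (by positivity)).congr_deriv ?_
  have hexp : exp (-2 * u) = 1 - √(1 - exp (-2 * u)) ^ 2 := by
    rw [sq_sqrt_one_sub_exp hu.le, sub_sub_cancel]
  rw [logCoshDecay]
  generalize √(1 - exp (-2 * u)) = R at *
  rw [hexp]
  field_simp
  ring

theorem hasDerivAt_log_one_add_logCoshDecay {u : ℝ} (hu : 0 < u) :
    HasDerivAt (fun u => log (1 + logCoshDecay u)) (-momentWeight u) u := by
  have hone_add : 0 < 1 + logCoshDecay u := by linarith [logCoshDecay_nonneg u]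
  refine (((hasDerivAt_logCoshDecay hu).const_add 1).log hone_add.ne').congr_deriv ?_
  have hpos := sqrt_one_sub_exp_pos hu
  rw [one_add_logCoshDecay, logCoshDecay, momentWeight]
  generalize √(1 - exp (-2 * u)) = R at *
  field_simp

theorem log_one_add_logCoshDecay_nonneg (u : ℝ) : 0 ≤ log (1 + logCoshDecay u) :=
  log_nonneg (by linarith [logCoshDecay_nonneg u])

theorem log_one_add_logCoshDecay_le (u : ℝ) : log (1 + logCoshDecay u) ≤ logCoshDecay u := by
  have hnonneg := logCoshDecay_nonneg u
  linarith [log_le_sub_one_of_pos (by linarith : 0 < 1 + logCoshDecay u)]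

/-- The last branch of `etaLog (u + log 2)`, up to the factor `6 / π ^ 2`. -/
noncomputable def etaTail (u : ℝ) : ℝ := 4 * log (1 + logCoshDecay u) - 2 * logCoshDecay u

theorem etaLog_add_log_two_of_pos {u : ℝ} (hu : 0 < u) :
    etaLog (u + log 2) = 6 / π ^ 2 * etaTail u := by
  have hlog := log_pos one_lt_two
  have hsqrt : √(1 / 4 - exp (-2 * (u + log 2))) = √(1 - exp (-2 * u)) / 2 := by
    have hexp : 1 / 4 - exp (-2 * (u + log 2)) = (1 - exp (-2 * u)) / 2 ^ 2 := by
      rw [neg_mul, exp_neg, exp_two_mul_add_log_two, neg_mul, exp_neg]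
      field_simp
      norm_num
    rw [hexp, sqrt_div' _ (by positivity), sqrt_sq two_pos.le]
  have hlog_one_add : log (1 + logCoshDecay u) = -log (1 / 2 + √(1 - exp (-2 * u)) / 2) := by
    rw [one_add_logCoshDecay, ← log_inv]
    congr 1
    field_simp
  have hdecay : exp (2 * u) * (1 - √(1 - exp (-2 * u))) * (1 + √(1 - exp (-2 * u))) = 1 := by
    have hinv : exp (2 * u) * exp (-2 * u) = 1 := by rw [← exp_add]; simp
    linear_combination (-exp (2 * u)) * sq_sqrt_one_sub_exp hu.le + hinv
  rw [etaLog, if_neg (by linarith), if_neg (by linarith), exp_two_mul_add_log_two, hsqrt, etaTail,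
    hlog_one_add, logCoshDecay]
  have hpos := sqrt_one_sub_exp_pos hu
  generalize √(1 - exp (-2 * u)) = R at *
  field_simp
  linear_combination (-4) * hdecay

theorem continuous_log_one_add_logCoshDecay : Continuous fun u => log (1 + logCoshDecay u) :=
  (continuous_const.add continuous_logCoshDecay).log fun u =>
    (add_pos_of_pos_of_nonneg one_pos (logCoshDecay_nonneg u)).ne'

theorem continuous_etaTail : Continuous etaTail :=
  (continuous_log_one_add_logCoshDecay.const_mul 4).sub (continuous_logCoshDecay.const_mul 2)

theorem abs_etaTail_le {u : ℝ} (hu : 0 ≤ u) : |etaTail u| ≤ 2 * exp (-2 * u) := by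
  have hnonneg := log_one_add_logCoshDecay_nonneg u
  have hle := log_one_add_logCoshDecay_le u
  have hexp := logCoshDecay_le_exp hu
  rw [etaTail, abs_le]
  constructor <;> linarith

theorem hasDerivAt_etaTail {u : ℝ} (hu : 0 < u) :
    HasDerivAt etaTail (2 * etaTail u - 8 * log (1 + logCoshDecay u)) u := by
  refine (((hasDerivAt_log_one_add_logCoshDecay hu).const_mul 4).sub
    ((hasDerivAt_logCoshDecay hu).const_mul 2)).congr_deriv ?_
  have hpos := sqrt_one_sub_exp_pos hu
  rw [etaTail, logCoshDecay, momentWeight]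
  generalize √(1 - exp (-2 * u)) = R at *
  field_simp
  ring

theorem integrableOn_pow_mul_etaTail (n : ℕ) :
    IntegrableOn (fun u => u ^ n * etaTail u) (Ioi 0) := by
  refine ((integrableOn_pow_mul_exp_mul_Ioi (neg_lt_zero.2 two_pos) 0 n).const_mul 2).mono'
    (by have := continuous_etaTail; fun_prop) ?_
  filter_upwards [ae_restrict_mem measurableSet_Ioi] with u hu
  rw [norm_mul, norm_of_nonneg (pow_nonneg (mem_Ioi.1 hu).le n), mul_left_comm]
  exact mul_le_mul_of_nonneg_left (abs_etaTail_le (mem_Ioi.1 hu).le)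
    (pow_nonneg (mem_Ioi.1 hu).le n)

theorem tendsto_pow_mul_atTop_nhds_zero_of_abs_le_exp {f : ℝ → ℝ} {C : ℝ}
    (hf : ∀ u, 0 ≤ u → |f u| ≤ C * exp (-2 * u)) (n : ℕ) :
    Tendsto (fun u => u ^ n * f u) atTop (𝓝 0) := by
  have hlim := (tendsto_pow_mul_exp_neg_mul_atTop_nhds_zero two_pos n).const_mul C
  rw [mul_zero] at hlim
  refine squeeze_zero_norm' ?_ hlim
  filter_upwards [eventually_ge_atTop 0] with u hu
  rw [norm_mul, norm_of_nonneg (pow_nonneg hu n), mul_left_comm]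
  exact mul_le_mul_of_nonneg_left (hf u hu) (pow_nonneg hu n)

theorem integral_Ioi_mul_etaTail (n : ℕ) :
    ∫ u in Ioi 0, (2 * u ^ (n + 1) + (n + 1) * u ^ n) * etaTail u =
      8 / (n + 2) * ∫ u in Ioi 0, u ^ (n + 2) * momentWeight u := by
  have hmain := integrableOn_two_mul_pow_succ_add_mul integrableOn_pow_mul_etaTail n
  have hmoment := (integrableOn_pow_mul_momentWeight (n + 2)).const_mul (8 / (n + 2 : ℝ))
  have hcont : Continuous fun u => u ^ (n + 1) * etaTail u +
      8 / (n + 2) * (u ^ (n + 2) * log (1 + logCoshDecay u)) := by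
    have := continuous_etaTail
    have := continuous_log_one_add_logCoshDecay
    fun_prop
  have hlim : Tendsto (fun u => u ^ (n + 1) * etaTail u +
      8 / (n + 2) * (u ^ (n + 2) * log (1 + logCoshDecay u))) atTop (𝓝 0) := by
    have hlog (u : ℝ) (hu : 0 ≤ u) : |log (1 + logCoshDecay u)| ≤ 1 * exp (-2 * u) := by
      rw [abs_of_nonneg (log_one_add_logCoshDecay_nonneg u), one_mul]
      exact (log_one_add_logCoshDecay_le u).trans (logCoshDecay_le_exp hu)
    simpa using (tendsto_pow_mul_atTop_nhds_zero_of_abs_le_exp (fun _ => abs_etaTail_le)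
      (n + 1)).add ((tendsto_pow_mul_atTop_nhds_zero_of_abs_le_exp hlog (n + 2)).const_mul
        (8 / (n + 2 : ℝ)))
  have hFTC := integral_Ioi_of_hasDerivAt_of_tendsto hcont.continuousWithinAt
    (fun u hu => hasDerivAt_pow_mul_add_pow_mul n (hasDerivAt_etaTail hu)
      (hasDerivAt_log_one_add_logCoshDecay hu)) (hmain.sub hmoment) hlim
  rw [integral_sub hmain hmoment, integral_const_mul] at hFTC
  simpa [sub_eq_zero] using hFTC

theorem integral_mul_etaLog (n : ℕ) :
    ∫ s, (2 * (s - log 2) ^ (n + 1) + (n + 1) * (s - log 2) ^ n) * etaLog s =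
      48 / ((n + 2) * π ^ 2) *
        ((∫ u in Ioi 0, u ^ (n + 2) * momentWeight u) - ∫ u in (-log 2)..0, u ^ (n + 2)) := by
  rw [← integral_add_right_eq_self _ (log 2)]
  simp only [add_sub_cancel_right]
  rw [integral_eq_add_of_eqOn_Iic_Ioc_Ioi (neg_nonpos.2 (log_nonneg one_le_two))
    (fun u hu => by rw [etaLog_add_log_two_of_le hu, mul_left_comm])
    (fun u hu => by rw [etaLog_add_log_two_of_mem_Ioc hu, mul_left_comm])
    (fun u hu => by rw [etaLog_add_log_two_of_pos hu, mul_left_comm])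
    ((integrableOn_two_mul_pow_succ_add_mul
      (integrableOn_pow_mul_four_mul_exp _) n).const_mul _)
    (Continuous.integrableOn_Ioc (by fun_prop))
    ((integrableOn_two_mul_pow_succ_add_mul integrableOn_pow_mul_etaTail n).const_mul _),
    integral_const_mul, integral_const_mul, integral_const_mul, integral_Iic_mul_four_mul_exp,
    integral_Ioc_mul_neg_four_mul_exp_add, integral_Ioi_mul_etaTail,
    four_mul_exp_two_mul_neg_log_two]
  field_simp
  ring

end Reduction

theorem rho_two :
    (∫ s : ℝ, (2 * (s - Real.log 2) ^ 2 + 2 * (s - Real.log 2)) * etaLog s) =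
      3 * Real.pi ^ 2 / 20 + 2 * Real.log 2 ^ 2
        - 24 / Real.pi ^ 2 * (riemannZeta 3).re * Real.log 2 := by
  have hreduction := integral_mul_etaLog 1
  rw [integral_pow, integral_pow_three_mul_momentWeight] at hreduction
  norm_num at hreduction
  rw [hreduction]
  field_simp
  ring
end

section
/- The generalized moment at (n, α) = (0, −1) satisfies ∫_ℝ e^{−s}·η_log(s) ds = 12·(4 − π)/π². -/
/-!
Put `u = exp (-s)`. The moment becomes `∫ u in (0, ∞), etaLog (-log u)`, whose integrand is, up to
the factor `6 / π ^ 2`, equal to `u⁻²` on `(1, ∞)`, to `2 - 4 log u - u⁻²` on `(1/2, 1)` and to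
`2 - 2 / p - 4 log p` on `(0, 1/2)`, where `p` is the larger root of `p (1 - p) = u ^ 2`. These
pieces have elementary antiderivatives and contribute `1`, `2 - 2 log 2` and `5 - 2 π + 2 log 2`.
-/

open MeasureTheory

open Set Real

lemma integral_exp_neg_smul_eq_integral_Ioi {E : Type*} [NormedAddCommGroup E] [NormedSpace ℝ E]
    (f : ℝ → E) :
    ∫ s, exp (-s) • f s = ∫ u in Ioi 0, f (-log u) := by
  have image_exp_neg : (fun s : ℝ ↦ exp (-s)) '' univ = Ioi 0 := by
    rw [image_univ, ← range_exp]
    exact neg_surjective.range_comp exp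
  have exp_neg_injective : Function.Injective fun s : ℝ ↦ exp (-s) :=
    exp_injective.comp neg_injective
  rw [← image_exp_neg, integral_image_eq_integral_abs_deriv_smul MeasurableSet.univ
    (fun s _ ↦ (hasDerivAt_neg s).exp.hasDerivWithinAt) exp_neg_injective.injOn]
  simp

section LargerRoot

/-- The larger root `p` of `p * (1 - p) = u ^ 2`, for `|u| ≤ 1 / 2`. It takes the junk value `1 / 2`
for other `u`, which makes it continuous on `ℝ`. -/
noncomputable def largerRoot (u : ℝ) : ℝ := 1 / 2 + √(1 / 4 - u ^ 2)

lemma largerRoot_pos (u : ℝ) : 0 < largerRoot u := by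
  unfold largerRoot
  positivity

@[fun_prop]
lemma continuous_largerRoot : Continuous largerRoot := by
  unfold largerRoot
  fun_prop

lemma largerRoot_half : largerRoot (1 / 2) = 1 / 2 := by
  norm_num [largerRoot]

variable {u : ℝ}

lemma largerRoot_mul_one_sub (hu : |u| ≤ 1 / 2) : largerRoot u * (1 - largerRoot u) = u ^ 2 := by
  have discrim_nonneg : 0 ≤ 1 / 4 - u ^ 2 := by nlinarith [abs_nonneg u, sq_abs u]
  unfold largerRoot
  linarith [sq_sqrt discrim_nonneg]

lemma quarter_sub_sq_pos (hu : |u| < 1 / 2) : 0 < 1 / 4 - u ^ 2 := by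
  nlinarith [abs_nonneg u, sq_abs u]

lemma half_lt_largerRoot (hu : |u| < 1 / 2) : 1 / 2 < largerRoot u := by
  unfold largerRoot
  linarith [sqrt_pos.mpr (quarter_sub_sq_pos hu)]

lemma hasDerivAt_largerRoot (hu : |u| < 1 / 2) :
    HasDerivAt largerRoot (-u / (largerRoot u - 1 / 2)) u := by
  have h := ((((hasDerivAt_id u).pow 2).const_sub (1 / 4)).sqrt
    (quarter_sub_sq_pos hu).ne').const_add (1 / 2)
  refine h.congr_deriv ?_
  simp only [largerRoot, id, Pi.pow_apply]
  field_simp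
  ring

lemma hasDerivAt_arcsin_two_mul (hu : |u| < 1 / 2) :
    HasDerivAt (fun x ↦ arcsin (2 * x)) (1 / (largerRoot u - 1 / 2)) u := by
  obtain ⟨hu_neg, hu_pos⟩ := abs_lt.mp hu
  have sqrt_eq : √(1 - (2 * u) ^ 2) = 2 * √(1 / 4 - u ^ 2) := by
    rw [show 1 - (2 * u) ^ 2 = 2 ^ 2 * (1 / 4 - u ^ 2) by ring, sqrt_mul (by norm_num),
      sqrt_sq (by norm_num)]
  have h := (hasDerivAt_arcsin (x := 2 * u) (by linarith) (by linarith)).comp u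
    ((hasDerivAt_id u).const_mul 2)
  refine h.congr_deriv ?_
  rw [sqrt_eq, largerRoot]
  field_simp
  ring

/-- An antiderivative of `2 - 2 / p - 4 * log p`, where `p = largerRoot u`, on `|u| ≤ 1 / 2`. It
comes from the substitution `u = sin θ * cos θ`, under which `p = cos θ ^ 2`. -/
noncomputable def largerRootPrimitive (u : ℝ) : ℝ :=
  6 * u + 2 * u / largerRoot u - 4 * arcsin (2 * u) - 4 * u * log (largerRoot u)

lemma continuous_two_sub_div_largerRoot_sub_log :
    Continuous fun u ↦ 2 - 2 / largerRoot u - 4 * log (largerRoot u) := by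
  fun_prop (disch := exact fun u ↦ (largerRoot_pos u).ne')

lemma continuous_largerRootPrimitive : Continuous largerRootPrimitive := by
  have := continuous_arcsin
  unfold largerRootPrimitive
  fun_prop (disch := exact fun u ↦ (largerRoot_pos u).ne')

lemma hasDerivAt_largerRootPrimitive (hu : |u| < 1 / 2) :
    HasDerivAt largerRootPrimitive (2 - 2 / largerRoot u - 4 * log (largerRoot u)) u := by
  have root_ne_zero := (largerRoot_pos u).ne'
  have root_ne_half : largerRoot u - 1 / 2 ≠ 0 := by linarith [half_lt_largerRoot hu]
  have root_eq := largerRoot_mul_one_sub hu.le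
  have dp := hasDerivAt_largerRoot hu
  have h := ((((hasDerivAt_id u).const_mul 6).add
    (((hasDerivAt_id u).const_mul 2).div dp root_ne_zero)).sub
    ((hasDerivAt_arcsin_two_mul hu).const_mul 4)).sub
    (((hasDerivAt_id u).const_mul 4).mul (dp.log root_ne_zero))
  refine h.congr_deriv ?_
  simp only [id]
  generalize largerRoot u = p at *
  have two_mul_sub_one_ne_zero : 2 * p - 1 ≠ 0 := by
    contrapose root_ne_half
    linarith
  field_simp
  linear_combination (-4 - 8 * p) * root_eq

lemma integral_two_sub_div_largerRoot_sub_log {a b : ℝ} (ha : -(1 / 2) ≤ a) (hab : a ≤ b)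
    (hb : b ≤ 1 / 2) :
    ∫ u in a..b, (2 - 2 / largerRoot u - 4 * log (largerRoot u)) =
      largerRootPrimitive b - largerRootPrimitive a :=
  intervalIntegral.integral_eq_sub_of_hasDerivAt_of_le hab
    continuous_largerRootPrimitive.continuousOn
    (fun _ hu ↦ hasDerivAt_largerRootPrimitive
      (abs_lt.mpr ⟨ha.trans_lt hu.1, hu.2.trans_le hb⟩))
    (continuous_two_sub_div_largerRoot_sub_log.intervalIntegrable a b)

lemma largerRootPrimitive_zero : largerRootPrimitive 0 = 0 := by
  simp [largerRootPrimitive]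

lemma largerRootPrimitive_half : largerRootPrimitive (1 / 2) = 5 - 2 * π + 2 * log 2 := by
  rw [largerRootPrimitive, largerRoot_half, mul_one_div_cancel two_ne_zero, arcsin_one,
    one_div, log_inv]
  ring

end LargerRoot

lemma intervalIntegrable_two_sub_log_sub_rpow {a b : ℝ} (ha : 0 < a) (hb : 0 < b) :
    IntervalIntegrable (fun u : ℝ ↦ 2 - 4 * log u - u ^ (-2 : ℝ)) volume a b :=
  (intervalIntegrable_const.sub (intervalIntegral.intervalIntegrable_log'.const_mul 4)).sub
    (intervalIntegral.intervalIntegrable_rpow (.inr (notMem_uIcc_of_lt ha hb)))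

lemma integral_two_sub_log_sub_rpow {a b : ℝ} (ha : 0 < a) (hb : 0 < b) :
    ∫ u in a..b, (2 - 4 * log u - u ^ (-2 : ℝ)) =
      (6 * b - 4 * b * log b + b⁻¹) - (6 * a - 4 * a * log a + a⁻¹) := by
  have zero_notMem : (0 : ℝ) ∉ uIcc a b := notMem_uIcc_of_lt ha hb
  have integrable_log : IntervalIntegrable (fun u ↦ 4 * log u) volume a b :=
    intervalIntegral.intervalIntegrable_log'.const_mul 4
  rw [intervalIntegral.integral_sub (intervalIntegrable_const.sub integrable_log)
      (intervalIntegral.intervalIntegrable_rpow (.inr zero_notMem)),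
    intervalIntegral.integral_sub intervalIntegrable_const integrable_log,
    intervalIntegral.integral_const, intervalIntegral.integral_const_mul, integral_log,
    integral_rpow (.inr ⟨by norm_num, zero_notMem⟩)]
  norm_num [rpow_neg_one]
  ring

section EtaLog

variable {u : ℝ}

lemma exp_two_mul_neg_log (hu : 0 < u) : exp (2 * -log u) = u ^ (-2 : ℝ) := by
  rw [rpow_def_of_pos hu]
  ring_nf

lemma etaLog_neg_log_of_one_lt (hu : 1 < u) :
    etaLog (-log u) = 6 / π ^ 2 * u ^ (-2 : ℝ) := by
  rw [etaLog, if_pos (by linarith [log_pos hu]), exp_two_mul_neg_log (by linarith)]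

lemma etaLog_neg_log_of_half_lt (hu : 1 / 2 < u) (hu' : u < 1) :
    etaLog (-log u) = 6 / π ^ 2 * (2 - 4 * log u - u ^ (-2 : ℝ)) := by
  have u_pos : 0 < u := by linarith
  have log_neg := log_neg u_pos hu'
  have neg_log_le : -log u ≤ log 2 := by
    rw [← log_inv]
    exact log_le_log (by positivity) (inv_le_of_inv_le₀ (by norm_num) (by linarith))
  rw [etaLog, if_neg (by linarith), if_pos neg_log_le, exp_two_mul_neg_log u_pos]
  ring

lemma etaLog_neg_log_of_lt_half (hu : 0 < u) (hu' : u < 1 / 2) :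
    etaLog (-log u) = 6 / π ^ 2 * (2 - 2 / largerRoot u - 4 * log (largerRoot u)) := by
  have lt_neg_log : log 2 < -log u := by
    rw [← log_inv]
    exact log_lt_log two_pos ((lt_inv_comm₀ two_pos hu).mpr (by linarith))
  have exp_eq : exp (-2 * -log u) = u ^ 2 := by
    rw [neg_mul_neg, ← log_rpow hu, exp_log (by positivity), rpow_two]
  have sqrt_eq : √(1 / 4 - u ^ 2) = largerRoot u - 1 / 2 := by rw [largerRoot]; ring
  have root_eq := largerRoot_mul_one_sub (abs_lt.mpr ⟨by linarith, hu'⟩ : |u| < 1 / 2).le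
  have rpow_eq : u ^ (-2 : ℝ) = (largerRoot u * (1 - largerRoot u))⁻¹ := by
    rw [root_eq, rpow_neg hu.le, rpow_two]
  have one_sub_ne_zero : 1 - largerRoot u ≠ 0 := by
    intro h
    rw [h, mul_zero] at root_eq
    exact (pow_pos hu 2).ne root_eq
  rw [etaLog, if_neg (by linarith [log_pos one_lt_two]), if_neg lt_neg_log.not_ge,
    exp_two_mul_neg_log hu, exp_eq, sqrt_eq, rpow_eq, add_sub_cancel]
  field_simp
  ring

lemma integral_Ioi_etaLog_neg_log :
    ∫ u in Ioi 0, etaLog (-log u) =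
      6 / π ^ 2 * ((∫ u in 0..1 / 2, (2 - 2 / largerRoot u - 4 * log (largerRoot u))) +
        (∫ u in (1 / 2)..1, (2 - 4 * log u - u ^ (-2 : ℝ))) + ∫ u in Ioi 1, u ^ (-2 : ℝ)) := by
  have eqOn_low : EqOn (fun u ↦ 6 / π ^ 2 * (2 - 2 / largerRoot u - 4 * log (largerRoot u)))
      (fun u ↦ etaLog (-log u)) (Ioo 0 (1 / 2)) :=
    fun _ hu ↦ (etaLog_neg_log_of_lt_half hu.1 hu.2).symm
  have eqOn_mid : EqOn (fun u ↦ 6 / π ^ 2 * (2 - 4 * log u - u ^ (-2 : ℝ)))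
      (fun u ↦ etaLog (-log u)) (Ioo (1 / 2) 1) :=
    fun _ hu ↦ (etaLog_neg_log_of_half_lt hu.1 hu.2).symm
  have eqOn_high : EqOn (fun u ↦ 6 / π ^ 2 * u ^ (-2 : ℝ)) (fun u ↦ etaLog (-log u)) (Ioi 1) :=
    fun _ hu ↦ (etaLog_neg_log_of_one_lt hu).symm
  have integrable_low : IntervalIntegrable (fun u ↦ etaLog (-log u)) volume 0 (1 / 2) :=
    ((continuous_two_sub_div_largerRoot_sub_log.intervalIntegrable _ _).const_mul _).congr_uIoo
      (by rwa [uIoo_of_le one_half_pos.le])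
  have integrable_mid : IntervalIntegrable (fun u ↦ etaLog (-log u)) volume (1 / 2) 1 :=
    ((intervalIntegrable_two_sub_log_sub_rpow one_half_pos one_pos).const_mul _).congr_uIoo
      (by rwa [uIoo_of_le one_half_lt_one.le])
  have integrable_high : IntegrableOn (fun u ↦ etaLog (-log u)) (Ioi 1) :=
    IntegrableOn.congr_fun ((integrableOn_Ioi_rpow_of_lt (by norm_num) one_pos).const_mul _)
      eqOn_high measurableSet_Ioi
  rw [← intervalIntegral.integral_interval_add_Ioi' (integrable_low.trans integrable_mid)
      integrable_high,
    ← intervalIntegral.integral_add_adjacent_intervals integrable_low integrable_mid,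
    ← intervalIntegral.integral_congr_Ioo_of_le one_half_pos.le eqOn_low,
    ← intervalIntegral.integral_congr_Ioo_of_le one_half_lt_one.le eqOn_mid,
    ← setIntegral_congr_fun measurableSet_Ioi eqOn_high, intervalIntegral.integral_const_mul,
    intervalIntegral.integral_const_mul, integral_const_mul]
  ring

end EtaLog

theorem etaLog_negative_first_moment :
    (∫ s : ℝ, Real.exp (-s) * etaLog s) = 12 * (4 - Real.pi) / Real.pi ^ 2 := by
  have low : ∫ u in 0..1 / 2, (2 - 2 / largerRoot u - 4 * log (largerRoot u)) =
      5 - 2 * π + 2 * log 2 := by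
    rw [integral_two_sub_div_largerRoot_sub_log (by norm_num) one_half_pos.le le_rfl,
      largerRootPrimitive_half, largerRootPrimitive_zero, sub_zero]
  have mid : ∫ u in (1 / 2)..1, (2 - 4 * log u - u ^ (-2 : ℝ)) = 2 - 2 * log 2 := by
    rw [integral_two_sub_log_sub_rpow one_half_pos one_pos, log_one, one_div, log_inv]
    ring
  have high : ∫ u in Ioi (1 : ℝ), u ^ (-2 : ℝ) = 1 := by
    rw [integral_Ioi_rpow_of_lt (by norm_num) one_pos]
    norm_num
  calc ∫ s, exp (-s) * etaLog s
      = ∫ u in Ioi 0, etaLog (-log u) := integral_exp_neg_smul_eq_integral_Ioi etaLog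
    _ = 6 / π ^ 2 * (5 - 2 * π + 2 * log 2 + (2 - 2 * log 2) + 1) := by
      rw [integral_Ioi_etaLog_neg_log, low, mid, high]
    _ = 12 * (4 - π) / π ^ 2 := by ring
end
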